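/- arXiv:2204.05250 — 2 statements merged into one kernel-verified Lean document; each statement's English description precedes it below -/
import Mathlib

section
/- Let T be a tree on n ≥ 3 vertices with ℓ(T) leaves. Then γ^ID(T) ≤ (n + ℓ(T))/2. -/
/-!
Two-colour the tree with classes `A` and `Aᶜ`. Every vertex outside `A` has all its neighbours
in `A`, and two vertices of a tree have at most one common neighbour, so `A` alone separates all
pairs except those involving a leaf `b ∉ A`, which sees in `A` only its support `a`. For each such
`b` one further neighbour `f b` of `a` is added: `b` itself if `a` carries another leaf, and
otherwise some neighbour of `a` other than `b`. Then `a` always sees a code vertex that `b` does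
not, and two leaves at `a` separate each other, so `A ∪ f '' (leaves T \ A)` is an identifying
code (`exists_idCode_of_bipartition`).

Its size is at most `|A| + |leaves T \ A|`. Applied to `A` and to `Aᶜ`, these bounds add up to
`n + ℓ(T)`, so one of the two codes has size at most `(n + ℓ(T)) / 2`.
-/

open SimpleGraph

/-- The closed neighbourhood of a vertex. -/
def closedNbr {V : Type*} (G : SimpleGraph V) (v : V) : Set V := insert v (G.neighborSet v)

/-- `C` is an identifying code of `G`. -/
def IsIdCode {V : Type*} (G : SimpleGraph V) (C : Set V) : Prop :=
  (∀ v : V, (closedNbr G v ∩ C).Nonempty) ∧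
  ∀ u v : V, closedNbr G u ∩ C = closedNbr G v ∩ C → u = v

/-- A vertex of degree 1. -/
def IsLeaf {V : Type*} (G : SimpleGraph V) (v : V) : Prop := (G.neighborSet v).ncard = 1

/-- The set of leaves of `G`. -/
def leaves {V : Type*} (G : SimpleGraph V) : Set V := {v | IsLeaf G v}

/-- The set of support vertices of `G`. -/
def supports {V : Type*} (G : SimpleGraph V) : Set V := {v | ∃ u, IsLeaf G u ∧ G.Adj v u}

/-- `G` is identifiable: distinct vertices have distinct closed neighbourhoods. -/
def Identifiable {V : Type*} (G : SimpleGraph V) : Prop :=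
  ∀ u v : V, closedNbr G u = closedNbr G v → u = v

/-- `G` is twin-free: no two distinct vertices share an open or closed neighbourhood. -/
def TwinFree {V : Type*} (G : SimpleGraph V) : Prop :=
  ∀ u v : V, u ≠ v →
    G.neighborSet u ≠ G.neighborSet v ∧ closedNbr G u ≠ closedNbr G v

lemma isLeaf_iff {V : Type*} (T : SimpleGraph V) (b : V) :
    IsLeaf T b ↔ ∃ a, ∀ x, T.Adj b x ↔ x = a := by
  simp [IsLeaf, Set.ncard_eq_one, Set.ext_iff]

/-- In a connected graph on at least three vertices, the neighbour of a leaf has another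
neighbour: otherwise the two would form a whole component. -/
lemma exists_other_neighbor {V : Type*} [Fintype V] (T : SimpleGraph V)
    (hconn : T.Connected) (hn : 3 ≤ Fintype.card V) {a b : V} (hb : IsLeaf T b)
    (hab : T.Adj b a) : ∃ x, x ≠ b ∧ T.Adj a x := by
  classical
  by_contra! h
  obtain ⟨a', ha'⟩ := (isLeaf_iff T b).1 hb
  obtain rfl := (ha' a).1 hab
  obtain ⟨w, hw⟩ : ∃ w, w ∉ ({a, b} : Finset V) := by
    by_contra! hall
    have h1 : Fintype.card V ≤ ({a, b} : Finset V).card :=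
      Finset.card_le_card (fun x _ => hall x)
    have := Finset.card_le_two (a := a) (b := b)
    omega
  obtain ⟨p⟩ := hconn.preconnected a w
  obtain ⟨d, -, h1, h2⟩ := p.exists_boundary_dart (({a, b} : Finset V) : Set V) (by simp)
    (by simpa using hw)
  simp only [Finset.coe_insert, Finset.coe_singleton, Set.mem_insert_iff,
    Set.mem_singleton_iff, not_or] at h1 h2
  have hd := d.adj
  rcases h1 with h1 | h1 <;> rw [h1] at hd
  · exact h _ h2.2 hd
  · exact h2.1 ((ha' _).1 hd)

/-- Two common neighbours of `u` and `v` would give two distinct paths of length two. -/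
lemma common_neighbor_unique {V : Type*} {T : SimpleGraph V} (hT : T.IsAcyclic) {u v x y : V}
    (huv : u ≠ v) (hux : T.Adj u x) (hvx : T.Adj v x) (huy : T.Adj u y) (hvy : T.Adj v y) :
    x = y := by
  have key : ∀ z (h1 : T.Adj u z) (h2 : T.Adj z v),
      (Walk.cons h1 (Walk.cons h2 Walk.nil)).IsPath := by
    intro z h1 h2
    simp [Walk.isPath_def, h1.ne, h2.ne, huv]
  have := (hT.subsingleton_path u v).elim ⟨_, key x hux hvx.symm⟩ ⟨_, key y huy hvy.symm⟩
  have := congrArg (fun p : T.Path u v => p.1.support) this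
  simpa using this

/-- `A` is one colour class of a proper two-colouring; the code is `A` together with one extra
neighbour of the support of each leaf outside `A`. -/
lemma exists_idCode_of_bipartition {V : Type*} [Fintype V] (T : SimpleGraph V)
    (htree : T.IsTree) (hn : 3 ≤ Fintype.card V) (A : Set V)
    (hA : ∀ u v, T.Adj u v → (u ∈ A ↔ v ∉ A)) :
    ∃ C : Set V, IsIdCode T C ∧ C.ncard ≤ A.ncard + (leaves T \ A).ncard := by
  classical
  have hf : ∀ b, ∃ x, IsLeaf T b → ∀ a, T.Adj b a → T.Adj a x ∧
      (x = b ↔ ∃ b', b' ≠ b ∧ IsLeaf T b' ∧ T.Adj a b') := by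
    intro b
    by_cases hb : IsLeaf T b
    · obtain ⟨a, ha⟩ := (isLeaf_iff T b).1 hb
      have hba : T.Adj b a := (ha a).2 rfl
      by_cases h : ∃ b', b' ≠ b ∧ IsLeaf T b' ∧ T.Adj a b'
      · refine ⟨b, fun _ a' ha' => ?_⟩
        obtain rfl := (ha a').1 ha'
        exact ⟨hba.symm, by simpa using h⟩
      · obtain ⟨x, hxb, hx⟩ := exists_other_neighbor T htree.connected hn hb hba
        refine ⟨x, fun _ a' ha' => ?_⟩
        obtain rfl := (ha a').1 ha'
        exact ⟨hx, by simp only [hxb, h]⟩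
    · exact ⟨b, fun h => absurd h hb⟩
  -- `f b` is the extra code vertex for a leaf `b`; on other vertices its value is irrelevant.
  choose f hf using hf
  have : Nontrivial V := Fintype.one_lt_card_iff_nontrivial.1 (by omega)
  refine ⟨A ∪ f '' (leaves T \ A), ⟨fun v => ?_, ?_⟩, ?_⟩
  · by_cases hv : v ∈ A
    · exact ⟨v, Or.inl rfl, Or.inl hv⟩
    · obtain ⟨x, hx⟩ := htree.connected.preconnected.exists_adj_of_nontrivial v
      exact ⟨x, Or.inr hx, Or.inl (by have := hA _ _ hx; tauto)⟩
  · set C := A ∪ f '' (leaves T \ A) with hC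
    have hAC : ∀ x ∈ A, x ∈ C := fun x hx => Or.inl hx
    have hfC : ∀ b, IsLeaf T b → b ∉ A → f b ∈ C := fun b h1 h2 =>
      Or.inr ⟨b, ⟨h1, h2⟩, rfl⟩
    have mem : ∀ u x, x ∈ closedNbr T u ∩ C ↔ (x = u ∨ T.Adj u x) ∧ x ∈ C := fun u x => Iff.rfl
    -- A vertex of `A` and a vertex outside `A` see different code vertices.
    have mixed : ∀ u v, u ∈ A → v ∉ A → closedNbr T u ∩ C ≠ closedNbr T v ∩ C := by
      intro u v hu hv E
      have E' : ∀ x, (x = u ∨ T.Adj u x) ∧ x ∈ C ↔ (x = v ∨ T.Adj v x) ∧ x ∈ C := fun x => by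
        rw [← mem, ← mem, E]
      have hvu : T.Adj v u := by
        rcases ((E' u).1 ⟨Or.inl rfl, hAC u hu⟩).1 with h | h
        · exact absurd (h ▸ hu) hv
        · exact h
      have hnb : ∀ x, T.Adj v x ↔ x = u := by
        refine fun x => ⟨fun hx => ?_, fun h => h ▸ hvu⟩
        have hxA : x ∈ A := by have := hA _ _ hx; tauto
        rcases ((E' x).2 ⟨Or.inr hx, hAC x hxA⟩).1 with h | h
        · exact h
        · exact absurd hxA ((hA _ _ h).1 hu)
      have hleaf : IsLeaf T v := (isLeaf_iff T v).2 ⟨u, hnb⟩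
      -- Any code vertex adjacent to `u` is `v` itself.
      have only : ∀ y ∈ C, T.Adj u y → y = v := by
        intro y hy huy
        rcases ((E' y).1 ⟨Or.inr huy, hy⟩).1 with h | h
        · exact h
        · exact absurd ((hnb y).1 h).symm huy.ne
      obtain ⟨h1, h2⟩ := hf v hleaf u hvu
      obtain ⟨b, hbv, hb, hub⟩ := h2.1 (only _ (hfC v hleaf hv) h1)
      have hfb : f b = b := (hf b hb u hub.symm).2.2 ⟨v, hbv.symm, hleaf, hvu.symm⟩
      have hbC := hfC b hb ((hA _ _ hub).1 hu)
      rw [hfb] at hbC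
      exact hbv (only b hbC hub)
    intro u v E
    by_cases hu : u ∈ A <;> by_cases hv : v ∈ A
    · rcases ((mem v u).1 (E ▸ (mem u u).2 ⟨Or.inl rfl, hAC u hu⟩)).1 with h | h
      · exact h
      · exact absurd hu ((hA _ _ h).1 hv)
    · exact absurd E (mixed u v hu hv)
    · exact absurd E.symm (mixed v u hv hu)
    · by_contra huv
      have E' : ∀ x, (x = u ∨ T.Adj u x) ∧ x ∈ C ↔ (x = v ∨ T.Adj v x) ∧ x ∈ C := fun x => by
        rw [← mem, ← mem, E]
      have nb : ∀ x, T.Adj u x ↔ T.Adj v x := by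
        intro x
        constructor <;> intro hx
        · have hxA : x ∈ A := by have := hA _ _ hx; tauto
          rcases ((E' x).1 ⟨Or.inr hx, hAC x hxA⟩).1 with h | h
          · exact absurd (h ▸ hxA) hv
          · exact h
        · have hxA : x ∈ A := by have := hA _ _ hx; tauto
          rcases ((E' x).2 ⟨Or.inr hx, hAC x hxA⟩).1 with h | h
          · exact absurd (h ▸ hxA) hu
          · exact h
      -- `u` and `v` have the same neighbours, so in a tree they are leaves at the same vertex.
      obtain ⟨a, ha⟩ := htree.connected.preconnected.exists_adj_of_nontrivial u
      have hua : ∀ x, T.Adj u x ↔ x = a := fun x =>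
        ⟨fun hx => common_neighbor_unique htree.isAcyclic huv hx ((nb x).1 hx) ha ((nb a).1 ha),
          fun h => h ▸ ha⟩
      have hul : IsLeaf T u := (isLeaf_iff T u).2 ⟨a, hua⟩
      have hvl : IsLeaf T v := (isLeaf_iff T v).2 ⟨a, fun x => (nb x).symm.trans (hua x)⟩
      have hfu : f u = u := (hf u hul a ha).2.2 ⟨v, Ne.symm huv, hvl, ((nb a).1 ha).symm⟩
      have huC := hfC u hul hu
      rw [hfu] at huC
      rcases ((E' u).1 ⟨Or.inl rfl, huC⟩).1 with h | h
      · exact huv h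
      · exact hv ((hA _ _ h).2 hu)
  · exact (Set.ncard_union_le _ _).trans (Nat.add_le_add_left (Set.ncard_image_le) _)

theorem stmt_4 {V : Type*} [Fintype V] (T : SimpleGraph V)
    (htree : T.IsTree) (hn : 3 ≤ Fintype.card V) :
    ∃ C : Set V, IsIdCode T C ∧
      (C.ncard : ℝ) ≤ (Fintype.card V + (leaves T).ncard) / 2 := by
  obtain ⟨c⟩ := htree.colorable_two
  set A : Set V := {v | c v = 0} with hAdef
  have hA : ∀ u v, T.Adj u v → (u ∈ A ↔ v ∉ A) := by
    intro u v h
    have := c.valid h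
    simp only [hAdef, Set.mem_ofPred_eq]
    omega
  obtain ⟨C, hC, h1⟩ := exists_idCode_of_bipartition T htree hn A hA
  obtain ⟨D, hD, h2⟩ := exists_idCode_of_bipartition T htree hn Aᶜ
    (fun u v h => by have := hA u v h; simp only [Set.mem_compl_iff]; tauto)
  have h3 := Set.ncard_add_ncard_compl A
  have h4 := Set.ncard_inter_add_ncard_sdiff_eq_ncard (leaves T) A
  rw [Set.sdiff_compl] at h2
  rw [Nat.card_eq_fintype_card] at h3
  have h5 : C.ncard + D.ncard ≤ Fintype.card V + (leaves T).ncard := by omega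
  have h6 : (C.ncard : ℝ) + D.ncard ≤ Fintype.card V + (leaves T).ncard := by exact_mod_cast h5
  rcases le_total (C.ncard : ℝ) D.ncard with h | h
  · exact ⟨C, hC, by linarith⟩
  · exact ⟨D, hD, by linarith⟩
end

section
/- Let G be a connected twin-free bipartite graph on n vertices with γ^ID(G) = 2n/3. Then G is the 2-corona H∘₂ of some bipartite graph H. -/
/-!
Write `n` for the order of `G`, `L` for its set of leaves and `A i` for its colour classes.
Two kinds of identifying codes give the result.

* `V \ L` is an identifying code unless `G` is a path on four vertices
  (`isIdCode_compl_leaves`), so `k ≤ n - |L|`.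
* For a colour `i`, the class `A i` separates everything except a leaf outside `A i` from its
  support. This is repaired by adding, for every such leaf `u`, one further neighbour `τ u` of the
  support of `u` (`isIdCode_colorClass`). Hence `k ≤ |A i| + |τ '' (L \ A i)|`, and summing over
  both colours, `2 k ≤ n + |L|`.

If `3 k = 2 n`, all these inequalities are equalities and `|L| = n / 3`. So every admissible choice
`τ` is injective on the leaves of each colour, which means that distinct supports have no common
non-leaf neighbour. Moreover no two supports are adjacent: otherwise one of them, say `b`, has
degree at least three, `b` can be chosen as the extra vertex of the other one, and then the leaf at
`b` can be dropped from the code. Thus the leaves, the supports and the values of `τ` are `n`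
distinct vertices, and the adjacencies among them are those of the 2-corona of the graph induced
on the values of `τ`.
-/

open SimpleGraph

/-- The 2-corona of a graph: to each vertex (v,0) attach a pendant path (v,1)-(v,2). -/
def twoCorona {A : Type*} (H : SimpleGraph A) : SimpleGraph (A × Fin 3) :=
  SimpleGraph.fromRel (fun p q =>
    (p.2 = 0 ∧ q.2 = 0 ∧ H.Adj p.1 q.1) ∨
    (p.1 = q.1 ∧ p.2 = 0 ∧ q.2 = 1) ∨
    (p.1 = q.1 ∧ p.2 = 1 ∧ q.2 = 2))

/-! ### Leaves, supports and two-colourings -/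

lemma bool_eq_of_ne {a b i : Bool} (hb : a ≠ b) (hi : a ≠ i) : b = i := by
  revert a b i; decide

lemma no_triangle {V : Type} {G : SimpleGraph V} {c : V → Bool}
    (hc : ∀ u v, G.Adj u v → c u ≠ c v) {x y z : V} (hxy : G.Adj x y) (hxz : G.Adj x z) :
    ¬ G.Adj y z := fun hyz => hc y z hyz (bool_eq_of_ne (hc x y hxy) (hc x z hxz))

lemma IsLeaf.exists_adj_iff {V : Type} {G : SimpleGraph V} {u : V} (h : IsLeaf G u) :
    ∃ s, ∀ x, G.Adj u x ↔ x = s := by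
  obtain ⟨s, hs⟩ := Set.ncard_eq_one.1 h
  refine ⟨s, fun x => ?_⟩
  rw [← SimpleGraph.mem_neighborSet, hs, Set.mem_singleton_iff]

lemma isLeaf_of_adj_iff {V : Type} {G : SimpleGraph V} {u s : V} (h : ∀ x, G.Adj u x ↔ x = s) :
    IsLeaf G u := by
  refine Set.ncard_eq_one.2 ⟨s, ?_⟩
  ext x
  simp [h]

lemma leaf_unique {V : Type} {G : SimpleGraph V} (htf : TwinFree G) {u v b : V}
    (hu : IsLeaf G u) (hv : IsLeaf G v) (hub : G.Adj u b) (hvb : G.Adj v b) : u = v := by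
  by_contra hne
  apply (htf u v hne).1
  obtain ⟨s, hs⟩ := hu.exists_adj_iff
  obtain ⟨t, ht⟩ := hv.exists_adj_iff
  ext x
  grind [SimpleGraph.mem_neighborSet]

lemma not_leaf_of_adj_leaf {V : Type} {G : SimpleGraph V} (htf : TwinFree G) {u s : V}
    (hu : IsLeaf G u) (hus : G.Adj u s) : ¬ IsLeaf G s := by
  intro hv
  apply (htf u s hus.ne).2
  obtain ⟨a, ha⟩ := hu.exists_adj_iff
  obtain ⟨b, hb⟩ := hv.exists_adj_iff
  have := (hb u).1 hus.symm
  ext x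
  simp only [closedNbr, Set.mem_insert_iff, SimpleGraph.mem_neighborSet]
  grind

lemma exists_other_adj {V : Type} {G : SimpleGraph V} {u s : V}
    (hu : ¬ IsLeaf G u) (hus : G.Adj u s) : ∃ t, t ≠ s ∧ G.Adj u t := by
  by_contra! h
  apply hu
  exact isLeaf_of_adj_iff (s := s) fun x => ⟨fun hx => by by_contra hne; exact h x hne hx,
    fun hx => hx ▸ hus⟩

/-- A connected graph with a path `a', a, b, b'` whose vertices have no other neighbours has
exactly four vertices. -/
lemma card_eq_four {V : Type} [Fintype V] {G : SimpleGraph V} (hconn : G.Connected)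
    (htf : TwinFree G) {a a' b b' : V} (ha' : IsLeaf G a') (hb' : IsLeaf G b')
    (haa' : G.Adj a a') (hbb' : G.Adj b b') (hab : G.Adj a b)
    (ha : ∀ x, G.Adj a x → x = a' ∨ x = b) (hb : ∀ x, G.Adj b x → x = b' ∨ x = a) :
    Fintype.card V = 4 := by
  classical
  have hall : ∀ x, x ∈ ({a, b, a', b'} : Finset V) := by
    intro x
    obtain ⟨w⟩ := hconn.preconnected a x
    obtain ⟨s, hs⟩ := ha'.exists_adj_iff
    obtain ⟨t, ht⟩ := hb'.exists_adj_iff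
    have hsa := (hs a).1 haa'.symm
    have htb := (ht b).1 hbb'.symm
    have hstep : ∀ y z, G.Adj y z → y ∈ ({a, b, a', b'} : Finset V) →
        z ∈ ({a, b, a', b'} : Finset V) := by
      intro y z hyz hy
      simp only [Finset.mem_insert, Finset.mem_singleton] at hy ⊢
      rcases hy with rfl | rfl | rfl | rfl
      · rcases ha z hyz with h | h <;> simp [h]
      · rcases hb z hyz with h | h <;> simp [h]
      · simp [(hs z).1 hyz, hsa]
      · simp [(ht z).1 hyz, htb]
    have : ∀ y z : V, G.Walk y z → y ∈ ({a, b, a', b'} : Finset V) →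
        z ∈ ({a, b, a', b'} : Finset V) := by
      intro y z w
      induction w with
      | nil => exact id
      | cons h _ ih => exact fun hy => ih (hstep _ _ h hy)
    exact this a x w (by simp)
  have h1 := not_leaf_of_adj_leaf htf ha' haa'.symm
  have h2 := not_leaf_of_adj_leaf htf hb' hbb'.symm
  have h3 : a' ≠ b' := by
    rintro rfl
    obtain ⟨s, hs⟩ := ha'.exists_adj_iff
    have e1 := (hs a).1 haa'.symm
    have e2 := (hs b).1 hbb'.symm
    exact hab.ne (e1.trans e2.symm)
  rw [← Finset.card_univ, ← Finset.eq_univ_iff_forall.2 hall]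
  have h4 : a ≠ b' := by rintro rfl; exact h1 hb'
  have h5 : b ≠ a' := by rintro rfl; exact h2 ha'
  rw [Finset.card_insert_of_notMem, Finset.card_insert_of_notMem, Finset.card_pair h3]
  · simp [h5, hbb'.ne]
  · simp [h4, hab.ne, haa'.ne]

/-! ### Two families of identifying codes -/

/-- Two distinct non-leaves that are not separated are adjacent, and each has exactly one further
neighbour, a leaf; this makes `G` a path on four vertices, which `hcard` excludes. -/
lemma isIdCode_compl_leaves {V : Type} [Fintype V] {G : SimpleGraph V} (hconn : G.Connected)
    (htf : TwinFree G) {c : V → Bool} (hc : ∀ u v, G.Adj u v → c u ≠ c v)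
    (hcard : Fintype.card V ≠ 4) (hnbr : ∀ v, ∃ w, G.Adj v w) :
    IsIdCode G {v | ¬ IsLeaf G v} := by
  have hmem : ∀ x w, w ∈ closedNbr G x ∩ {v | ¬ IsLeaf G v} ↔
      (w = x ∨ G.Adj x w) ∧ ¬ IsLeaf G w := by
    intro x w; simp [closedNbr]
  refine ⟨fun v => ?_, fun u v h => ?_⟩
  · by_cases hv : IsLeaf G v
    · obtain ⟨w, hw⟩ := hnbr v
      exact ⟨w, (hmem v w).2 ⟨Or.inr hw, not_leaf_of_adj_leaf htf hv hw⟩⟩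
    · exact ⟨v, (hmem v v).2 ⟨Or.inl rfl, hv⟩⟩
  · have key : ∀ w, ((w = u ∨ G.Adj u w) ∧ ¬ IsLeaf G w) ↔
        ((w = v ∨ G.Adj v w) ∧ ¬ IsLeaf G w) := by
      intro w; rw [← hmem, ← hmem, h]
    clear h
    -- A vertex all of whose neighbours are leaves would have two leaves attached to it.
    have hmixed : ∀ x y, IsLeaf G x → ¬ IsLeaf G y →
        ¬ ∀ w, ((w = x ∨ G.Adj x w) ∧ ¬ IsLeaf G w) ↔ ((w = y ∨ G.Adj y w) ∧ ¬ IsLeaf G w) := by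
      intro x y hx hy h
      have hxy : G.Adj x y := by
        rcases ((h y).2 ⟨Or.inl rfl, hy⟩).1 with e | e
        · exact absurd hx (e ▸ hy)
        · exact e
      obtain ⟨t, htx, hyt⟩ := exists_other_adj hy hxy.symm
      by_cases htl : IsLeaf G t
      · exact htx (leaf_unique htf htl hx hyt.symm hxy)
      · rcases ((h t).2 ⟨Or.inr hyt, htl⟩).1 with e | e
        · exact htx e
        · exact no_triangle hc hxy e hyt
    by_cases hu : IsLeaf G u <;> by_cases hv : IsLeaf G v
    · obtain ⟨s, hs⟩ := hnbr u
      have hsl := not_leaf_of_adj_leaf htf hu hs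
      rcases ((key s).1 ⟨Or.inr hs, hsl⟩).1 with e | e
      · exact absurd hv (e ▸ hsl)
      · exact leaf_unique htf hu hv hs e
    · exact absurd key (hmixed u v hu hv)
    · exact absurd (fun w => (key w).symm) (hmixed v u hv hu)
    · by_contra hne
      have huv : G.Adj u v := by
        rcases ((key v).2 ⟨Or.inl rfl, hv⟩).1 with e | e
        · exact absurd e.symm hne
        · exact e
      -- Bipartite graphs have no triangles, so all other neighbours of `u` and `v` are leaves.
      have hl : ∀ x y, G.Adj x y → (∀ w, ((w = x ∨ G.Adj x w) ∧ ¬ IsLeaf G w) ↔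
          ((w = y ∨ G.Adj y w) ∧ ¬ IsLeaf G w)) → ∀ w, w ≠ y → G.Adj x w → IsLeaf G w := by
        intro x y hxy h w hw hxw
        by_contra hwl
        rcases ((h w).1 ⟨Or.inr hxw, hwl⟩).1 with e | e
        · exact hw e
        · exact no_triangle hc hxy hxw e
      have hlu := hl u v huv key
      have hlv := hl v u huv.symm (fun w => (key w).symm)
      obtain ⟨a', ha1, ha2⟩ := exists_other_adj hu huv
      obtain ⟨b', hb1, hb2⟩ := exists_other_adj hv huv.symm
      refine hcard (card_eq_four hconn htf (hlu _ ha1 ha2) (hlv _ hb1 hb2) ha2 hb2 huv ?_ ?_)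
      · intro x hx
        by_cases hxv : x = v
        · exact Or.inr hxv
        · exact Or.inl (leaf_unique htf (hlu x hxv hx) (hlu _ ha1 ha2) hx.symm ha2.symm)
      · intro x hx
        by_cases hxv : x = u
        · exact Or.inr hxv
        · exact Or.inl (leaf_unique htf (hlv x hxv hx) (hlv _ hb1 hb2) hx.symm hb2.symm)

/-- The colour class `i` becomes an identifying code after adding a set `D` of non-leaves of the
other colour that meets the neighbourhood of each support of colour `i`. Leaves of colour `i`
attached to a vertex of `D` of degree at least three can be left out: `E` is a set of such
leaves. -/
lemma isIdCode_colorClass {V : Type} {G : SimpleGraph V}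
    (htf : TwinFree G) {c : V → Bool} (hc : ∀ u v, G.Adj u v → c u ≠ c v)
    (hnbr : ∀ v, ∃ w, G.Adj v w) (i : Bool) (D E : Set V)
    (hD : ∀ x ∈ D, c x ≠ i ∧ ¬ IsLeaf G x)
    (hE : ∀ x ∈ E, c x = i ∧ IsLeaf G x ∧ ∃ b ∈ D, G.Adj x b ∧
      ∃ y z, y ≠ z ∧ y ≠ x ∧ z ≠ x ∧ G.Adj b y ∧ G.Adj b z)
    (hsup : ∀ a u, c a = i → IsLeaf G u → G.Adj a u → ∃ d ∈ D, G.Adj a d) :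
    IsIdCode G (({v | c v = i} \ E) ∪ D) := by
  have hmem : ∀ x w, w ∈ closedNbr G x ∩ (({v | c v = i} \ E) ∪ D) ↔
      (w = x ∨ G.Adj x w) ∧ ((c w = i ∧ w ∉ E) ∨ w ∈ D) := by
    intro x w; simp [closedNbr]
  have hEb : ∀ x ∈ E, ∀ b, G.Adj x b → b ∈ D ∧
      ∃ y z, y ≠ z ∧ y ∉ E ∧ z ∉ E ∧ G.Adj b y ∧ G.Adj b z := by
    intro x hx b hxb
    obtain ⟨-, hl, b', hb', hxb', y, z, hyz, hyx, hzx, hy, hz⟩ := hE x hx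
    obtain ⟨s, hs⟩ := hl.exists_adj_iff
    have : b = b' := ((hs b).1 hxb).trans ((hs b').1 hxb').symm
    subst this
    exact ⟨hb', y, z, hyz,
      fun h => hyx (leaf_unique htf (hE y h).2.1 hl hy.symm hxb),
      fun h => hzx (leaf_unique htf (hE z h).2.1 hl hz.symm hxb), hy, hz⟩
  have hcol : ∀ x w, G.Adj x w → c x ≠ i → c w = i := by
    exact fun x w h hx => bool_eq_of_ne (hc x w h) hx
  have hcol' : ∀ x w, G.Adj x w → c x = i → c w ≠ i := by
    exact fun x w h hx hw => hc x w h (hx.trans hw.symm)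
  refine ⟨fun v => ?_, fun u v h => ?_⟩
  · obtain ⟨w, hw⟩ := hnbr v
    by_cases hv : c v = i
    · by_cases hvE : v ∈ E
      · exact ⟨w, (hmem v w).2 ⟨Or.inr hw, Or.inr (hEb v hvE w hw).1⟩⟩
      · exact ⟨v, (hmem v v).2 ⟨Or.inl rfl, Or.inl ⟨hv, hvE⟩⟩⟩
    · by_cases hvD : v ∈ D
      · exact ⟨v, (hmem v v).2 ⟨Or.inl rfl, Or.inr hvD⟩⟩
      · refine ⟨w, (hmem v w).2 ⟨Or.inr hw, Or.inl ⟨hcol v w hw hv, fun hwE => ?_⟩⟩⟩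
        exact hvD (hEb w hwE v hw.symm).1
  · have key : ∀ w, ((w = u ∨ G.Adj u w) ∧ ((c w = i ∧ w ∉ E) ∨ w ∈ D)) ↔
        ((w = v ∨ G.Adj v w) ∧ ((c w = i ∧ w ∉ E) ∨ w ∈ D)) := by
      intro w; rw [← hmem, ← hmem, h]
    clear h hmem
    -- A code vertex of colour `i` is separated from every vertex of the other colour.
    have hAB : ∀ a x, c a = i → a ∉ E → c x ≠ i →
        (∀ w, ((w = a ∨ G.Adj a w) ∧ ((c w = i ∧ w ∉ E) ∨ w ∈ D)) ↔
        ((w = x ∨ G.Adj x w) ∧ ((c w = i ∧ w ∉ E) ∨ w ∈ D))) → False := by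
      intro a x ha haE hx h
      have hxa : G.Adj x a := by
        rcases ((h a).1 ⟨Or.inl rfl, Or.inl ⟨ha, haE⟩⟩).1 with e | e
        · exact absurd (e ▸ ha) hx
        · exact e
      have honly : ∀ w, G.Adj x w → w ∉ E → w = a := by
        intro w hw hwE
        rcases ((h w).2 ⟨Or.inr hw, Or.inl ⟨hcol x w hw hx, hwE⟩⟩).1 with e | e
        · exact e
        · exact absurd (hcol x w hw hx) (hcol' a w e ha)
      by_cases hnE : ∃ e ∈ E, G.Adj x e
      · obtain ⟨e, he, hxe⟩ := hnE
        obtain ⟨-, y, z, hyz, hy, hz, hxy, hxz⟩ := hEb e he x hxe.symm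
        exact hyz ((honly y hxy hy).trans (honly z hxz hz).symm)
      · push Not at hnE
        have hl : IsLeaf G x := isLeaf_of_adj_iff (s := a) fun w =>
          ⟨fun hw => honly w hw fun hwE => hnE w hwE hw, fun hw => hw ▸ hxa⟩
        obtain ⟨d, hd, had⟩ := hsup a x ha hl hxa.symm
        rcases ((h d).1 ⟨Or.inr had, Or.inr hd⟩).1 with e | e
        · exact (hD d hd).2 (e ▸ hl)
        · exact (hD d hd).1 (hcol x d e hx)
    -- So is an omitted leaf, whose only code neighbour lies in `D`.
    have hEB : ∀ a x, a ∈ E → c x ≠ i →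
        (∀ w, ((w = a ∨ G.Adj a w) ∧ ((c w = i ∧ w ∉ E) ∨ w ∈ D)) ↔
        ((w = x ∨ G.Adj x w) ∧ ((c w = i ∧ w ∉ E) ∨ w ∈ D))) → False := by
      intro a x ha hx h
      obtain ⟨b, hb⟩ := hnbr a
      obtain ⟨hbD, y, z, hyz, hy, hz, hby, hbz⟩ := hEb a ha b hb
      have hbx : b = x := by
        rcases ((h b).1 ⟨Or.inr hb, Or.inr hbD⟩).1 with e | e
        · exact e
        · exact absurd (hcol x b e hx) (hD b hbD).1
      subst hbx
      rcases ((h y).2 ⟨Or.inr hby, Or.inl ⟨hcol b y hby hx, hy⟩⟩).1 with e | e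
      · exact hy (e ▸ ha)
      · exact hcol' a y e (hE a ha).1 (hcol b y hby hx)
    have hAA : ∀ a x, c a = i → a ∉ E → c x = i →
        (∀ w, ((w = a ∨ G.Adj a w) ∧ ((c w = i ∧ w ∉ E) ∨ w ∈ D)) ↔
        ((w = x ∨ G.Adj x w) ∧ ((c w = i ∧ w ∉ E) ∨ w ∈ D))) → a = x := by
      intro a x ha haE hx h
      rcases ((h a).1 ⟨Or.inl rfl, Or.inl ⟨ha, haE⟩⟩).1 with e | e
      · exact e
      · exact absurd ha (hcol' x a e hx)
    have hDB : ∀ d x, d ∈ D → c x ≠ i →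
        (∀ w, ((w = d ∨ G.Adj d w) ∧ ((c w = i ∧ w ∉ E) ∨ w ∈ D)) ↔
        ((w = x ∨ G.Adj x w) ∧ ((c w = i ∧ w ∉ E) ∨ w ∈ D))) → d = x := by
      intro d x hd hx h
      rcases ((h d).1 ⟨Or.inl rfl, Or.inr hd⟩).1 with e | e
      · exact e
      · exact absurd (hcol x d e hx) (hD d hd).1
    have key' := fun w => (key w).symm
    by_cases hu : c u = i <;> by_cases hv : c v = i
    · by_cases huE : u ∈ E <;> by_cases hvE : v ∈ E
      · obtain ⟨b, hb⟩ := hnbr u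
        obtain ⟨hbD, -⟩ := hEb u huE b hb
        rcases ((key b).1 ⟨Or.inr hb, Or.inr hbD⟩).1 with e | e
        · exact absurd (e ▸ hv) (hD b hbD).1
        · exact leaf_unique htf (hE u huE).2.1 (hE v hvE).2.1 hb e
      · exact (hAA v u hv hvE hu key').symm
      · exact hAA u v hu huE hv key
      · exact hAA u v hu huE hv key
    · by_cases huE : u ∈ E
      · exact (hEB u v huE hv key).elim
      · exact (hAB u v hu huE hv key).elim
    · by_cases hvE : v ∈ E
      · exact (hEB v u hvE hu key').elim
      · exact (hAB v u hv hvE hu key').elim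
    · by_cases huD : u ∈ D
      · exact hDB u v huD hv key
      by_cases hvD : v ∈ D
      · exact (hDB v u hvD hu key').symm
      -- The code neighbours of a vertex outside the code are all its neighbours.
      have hsub : ∀ x y, c x ≠ i → x ∉ D → c y ≠ i →
          (∀ w, ((w = x ∨ G.Adj x w) ∧ ((c w = i ∧ w ∉ E) ∨ w ∈ D)) ↔
          ((w = y ∨ G.Adj y w) ∧ ((c w = i ∧ w ∉ E) ∨ w ∈ D))) →
          ∀ w, G.Adj x w → G.Adj y w := by
        intro x y hx hxD hy h w hw
        have hwE : w ∉ E := fun hwE => hxD (hEb w hwE x hw.symm).1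
        rcases ((h w).1 ⟨Or.inr hw, Or.inl ⟨hcol x w hw hx, hwE⟩⟩).1 with e | e
        · exact absurd (hcol x w hw hx) (e ▸ hy)
        · exact e
      by_contra hne
      apply (htf u v hne).1
      ext w
      exact ⟨hsub u v hu huD hv key w, hsub v u hv hvD hu key' w⟩

/-! ### The case of equality -/

theorem stmt_8 {V : Type} [Fintype V] (G : SimpleGraph V)
    (hconn : G.Connected) (htf : TwinFree G) (hbip : G.Colorable 2)
    (k : ℕ)
    (hleast : IsLeast {m : ℕ | ∃ C : Set V, IsIdCode G C ∧ C.ncard = m} k)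
    (hval : 3 * k = 2 * Fintype.card V) :
    ∃ (A : Type) (H : SimpleGraph A), H.Colorable 2 ∧ Nonempty (G ≃g twoCorona H) := by
  classical
  have hbip' := hbip
  obtain ⟨col⟩ := hbip'
  obtain ⟨c, hc⟩ : ∃ c : V → Bool, ∀ u v, G.Adj u v → c u ≠ c v := by
    refine ⟨fun v => decide (col v = 0), fun u v h => ?_⟩
    have := col.valid h
    simp only [ne_eq, decide_eq_decide]
    omega
  have hne := hconn.nonempty
  have hpos : 0 < Fintype.card V := Fintype.card_pos
  have hnt : Nontrivial V := Fintype.one_lt_card_iff_nontrivial.1 (by omega)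
  have hnbr : ∀ v, ∃ w, G.Adj v w := fun v => hconn.preconnected.exists_adj_of_nontrivial v
  have hk : ∀ C : Finset V, IsIdCode G (C : Set V) → k ≤ C.card := by
    intro C hC
    exact hleast.2 ⟨C, hC, Set.ncard_coe_finset C⟩
  set L : Finset V := Finset.univ.filter (fun v => IsLeaf G v) with hLdef
  have hL : ∀ u, u ∈ L ↔ IsLeaf G u := by simp [hLdef]
  have hkL : k + L.card ≤ Fintype.card V := by
    have h1 := hk Lᶜ (by
      convert isIdCode_compl_leaves hconn htf hc (by omega) hnbr using 1
      ext v
      simp [hL])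
    have h2 := Finset.card_add_card_compl L
    omega
  choose σ hσ using hnbr
  have hσ' : ∀ u, IsLeaf G u → ∀ x, G.Adj u x → x = σ u := by
    intro u hu x hx
    obtain ⟨s, hs⟩ := hu.exists_adj_iff
    exact ((hs x).1 hx).trans ((hs _).1 (hσ u)).symm
  have hσl : ∀ u, IsLeaf G u → ¬ IsLeaf G (σ u) := fun u hu => not_leaf_of_adj_leaf htf hu (hσ u)
  have hσinj : ∀ u v, IsLeaf G u → IsLeaf G v → σ u = σ v → u = v := fun u v hu hv h =>
    leaf_unique htf hu hv (hσ u) (h ▸ hσ v)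
  obtain ⟨τ, hτ⟩ : ∃ τ : V → V, ∀ u, IsLeaf G u → τ u ≠ u ∧ G.Adj (σ u) (τ u) := by
    have : ∀ u, ∃ t, IsLeaf G u → t ≠ u ∧ G.Adj (σ u) t := by
      intro u
      by_cases hu : IsLeaf G u
      · obtain ⟨t, ht⟩ := exists_other_adj (hσl u hu) (hσ u).symm
        exact ⟨t, fun _ => ht⟩
      · exact ⟨u, fun h => absurd h hu⟩
    choose τ hτ using this
    exact ⟨τ, hτ⟩
  have hTl : ∀ u, IsLeaf G u → ∀ x, x ≠ u → G.Adj (σ u) x → ¬ IsLeaf G x := fun u hu x hx h hxl =>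
    hx (leaf_unique htf hxl hu h.symm (hσ u))
  have hTc : ∀ u x, G.Adj (σ u) x → c x = c u := by
    exact fun u x h => bool_eq_of_ne (hc _ _ h) (hc _ _ (hσ u)).symm
  let A : Bool → Finset V := fun i => Finset.univ.filter (fun v => c v = i)
  let M : Bool → Finset V := fun i => L.filter (fun v => c v ≠ i)
  have hcode : ∀ (i : Bool) (f : V → V), (∀ u, IsLeaf G u → f u ≠ u ∧ G.Adj (σ u) (f u)) →
      ∀ E : Finset V, (∀ x ∈ E, c x = i ∧ IsLeaf G x ∧ σ x ∈ (M i).image f ∧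
        ∃ y z, y ≠ z ∧ y ≠ x ∧ z ≠ x ∧ G.Adj (σ x) y ∧ G.Adj (σ x) z) →
      k + E.card ≤ (A i).card + ((M i).image f).card := by
    intro i f hf E hE
    have h1 := hk ((A i \ E) ∪ (M i).image f) (by
      have := isIdCode_colorClass htf hc (fun v => ⟨σ v, hσ v⟩) i
        (((M i).image f : Finset V) : Set V) (E : Set V) ?_ ?_ ?_
      · simpa [A] using this
      · intro x hx
        simp only [Finset.coe_image, Set.mem_image, Finset.mem_coe, M, Finset.mem_filter, hL] at hx
        obtain ⟨u, ⟨hu, hui⟩, rfl⟩ := hx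
        exact ⟨by rw [hTc u _ (hf u hu).2]; exact hui, hTl u hu _ (hf u hu).1 (hf u hu).2⟩
      · intro x hx
        obtain ⟨h1, h2, h3, h4⟩ := hE x hx
        exact ⟨h1, h2, σ x, h3, hσ x, h4⟩
      · intro a u ha hu hau
        have hau' := hσ' u hu a hau.symm
        refine ⟨f u, ?_, hau' ▸ (hf u hu).2⟩
        refine Finset.mem_coe.2 (Finset.mem_image_of_mem _ ?_)
        simp only [M, Finset.mem_filter, hL]
        exact ⟨hu, fun hui => hc _ _ hau (ha.trans hui.symm)⟩)
    have hEA : E ⊆ A i := by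
      intro x hx
      simp [A, (hE x hx).1]
    have h2 := Finset.card_union_le (A i \ E) ((M i).image f)
    have h3 := Finset.card_sdiff_add_card_eq_card hEA
    omega
  have hAsum : (A true).card + (A false).card = Fintype.card V := by
    have h2 := Finset.card_filter_add_card_filter_not (s := Finset.univ) (fun v => c v = true)
    rw [Finset.card_univ] at h2
    simpa [A] using h2
  have hMsum : (M true).card + (M false).card = L.card := by
    have h2 := Finset.card_filter_add_card_filter_not (s := L) (fun v => c v = true)
    simp only [M]
    simp at h2 ⊢
    omega
  have hle : ∀ i, k ≤ (A i).card + (M i).card := by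
    intro i
    have h1 := hcode i τ hτ ∅ (by simp)
    have h2 := Finset.card_image_le (s := M i) (f := τ)
    simp only [Finset.card_empty] at h1
    omega
  have hLn : 3 * L.card = Fintype.card V := by
    have := hle true; have := hle false; omega
  have heq : ∀ i, k = (A i).card + (M i).card := by
    have := hle true; have := hle false
    intro i; cases i <;> omega
  -- A choice identifying two leaves would give a code with fewer than `k` vertices.
  have hfinj : ∀ f : V → V, (∀ u, IsLeaf G u → f u ≠ u ∧ G.Adj (σ u) (f u)) →
      ∀ u v, IsLeaf G u → IsLeaf G v → f u = f v → u = v := by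
    intro f hf u v hu hv h
    have hcuv : c u = c v := by
      rw [← hTc u _ (hf u hu).2, ← hTc v _ (hf v hv).2, h]
    have h1 := hcode (!(c u)) f hf ∅ (by simp)
    have h2 := heq (!(c u))
    have h3 : ((M (!(c u))).image f).card = (M (!(c u))).card :=
      le_antisymm Finset.card_image_le (by simp only [Finset.card_empty] at h1; omega)
    refine Finset.card_image_iff.1 h3 ?_ ?_ h
    · simp [M, hL, hu]
    · simp [M, hL, hv, ← hcuv]
  have hTdisj : ∀ u v x, IsLeaf G u → IsLeaf G v → x ≠ u → x ≠ v → G.Adj (σ u) x →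
      G.Adj (σ v) x → u = v := by
    intro u v x hu hv hxu hxv h1 h2
    refine hfinj (fun w => if w = u ∨ w = v then x else τ w) ?_ u v hu hv (by simp)
    intro w hw
    by_cases h : w = u ∨ w = v
    · simp only [h, if_true]
      rcases h with rfl | rfl
      · exact ⟨hxu, h1⟩
      · exact ⟨hxv, h2⟩
    · simp only [h, if_false]
      exact hτ w hw
  -- If two supports are adjacent, then the second one has degree two: otherwise the code obtained
  -- from it as the extra vertex of the first one could do without its leaf.
  have hdeg : ∀ u v, IsLeaf G u → IsLeaf G v → G.Adj (σ u) (σ v) →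
      ∀ x, G.Adj (σ v) x → x = v ∨ x = σ u := by
    intro u v hu hv huv x hx
    by_contra! hcon
    have hσvu : σ v ≠ u := fun h => hσl v hv (h ▸ hu)
    have hσuv : σ u ≠ v := fun h => hσl u hu (h ▸ hv)
    have hcu : c u = c (σ v) := (hTc u _ huv).symm
    have hcv := hc _ _ (hσ v)
    have h1 := hcode (c v) (fun w => if w = u then σ v else τ w) (by
      intro w hw
      by_cases h : w = u
      · subst h
        simp only [if_true]
        exact ⟨hσvu, huv⟩
      · simp only [h, if_false]
        exact hτ w hw) {v} (by
      intro y hy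
      rw [Finset.mem_singleton] at hy
      subst hy
      refine ⟨rfl, hv, ?_, x, σ u, hcon.2, hcon.1, hσuv, hx, huv.symm⟩
      refine Finset.mem_image.2 ⟨u, ?_, by simp⟩
      simp only [M, Finset.mem_filter, hL]
      exact ⟨hu, by rw [hcu]; exact hcv.symm⟩)
    have h2 := heq (c v)
    have h3 := Finset.card_image_le (s := M (c v)) (f := fun w => if w = u then σ v else τ w)
    rw [Finset.card_singleton] at h1
    omega
  have hSS : ∀ u v, IsLeaf G u → IsLeaf G v → ¬ G.Adj (σ u) (σ v) := by
    intro u v hu hv huv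
    have := card_eq_four hconn htf hu hv (hσ u).symm (hσ v).symm huv
      (hdeg v u hv hu huv.symm) (hdeg u v hu hv huv)
    omega
  have hτl : ∀ u, IsLeaf G u → ¬ IsLeaf G (τ u) := fun u hu => hTl u hu _ (hτ u hu).1 (hτ u hu).2
  have hτσ : ∀ u v, IsLeaf G u → IsLeaf G v → τ u ≠ σ v := fun u v hu hv h =>
    hSS u v hu hv (h ▸ (hτ u hu).2)
  -- Injectivity of `φ` suffices, since there are exactly `n / 3` leaves.
  let φ : {u // IsLeaf G u} × Fin 3 → V := fun p => ![τ p.1, σ p.1, p.1] p.2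
  have hφinj : Function.Injective φ := by
    rintro ⟨⟨u, hu⟩, i⟩ ⟨⟨v, hv⟩, j⟩ h
    have e1 := hτσ u v hu hv
    have e2 := hτσ v u hv hu
    have e3 := hτl u hu
    have e4 := hτl v hv
    have e5 := hσl u hu
    have e6 := hσl v hv
    have e7 := hσinj u v hu hv
    have e8 := hfinj τ hτ u v hu hv
    fin_cases i <;> fin_cases j <;> simp [φ] at h ⊢ <;> grind
  have hφbij : Function.Bijective φ := by
    rw [Fintype.bijective_iff_injective_and_card]
    refine ⟨hφinj, ?_⟩
    rw [Fintype.card_prod, Fintype.card_fin, Fintype.card_of_subtype L hL]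
    omega
  refine ⟨{u // IsLeaf G u}, G.comap (fun u => τ u.1), ?_, ⟨?_⟩⟩
  · exact hbip.of_hom (SimpleGraph.Hom.comap (fun u : {u // IsLeaf G u} => τ u.1) G)
  · refine RelIso.symm ⟨Equiv.ofBijective φ hφbij, ?_⟩
    rintro ⟨⟨u, hu⟩, i⟩ ⟨⟨v, hv⟩, j⟩
    simp only [Equiv.ofBijective_apply, twoCorona, SimpleGraph.fromRel_adj]
    have d1 : G.Adj (τ u) (σ v) ↔ u = v :=
      ⟨fun h => hTdisj u v (τ u) hu hv (hτ u hu).1 (fun e => hτl u hu (e ▸ hv)) (hτ u hu).2 h.symm,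
        fun h => h ▸ (hτ u hu).2.symm⟩
    have d2 : G.Adj (σ u) (τ v) ↔ u = v :=
      ⟨fun h => hTdisj u v (τ v) hu hv (fun e => hτl v hv (e ▸ hu)) (hτ v hv).1 h (hτ v hv).2,
        fun h => h ▸ (hτ u hu).2⟩
    have d3 : ¬ G.Adj (τ u) v := fun h => hτσ u v hu hv (hσ' v hv _ h.symm)
    have d4 : ¬ G.Adj u (τ v) := fun h => hτσ v u hv hu (hσ' u hu _ h)
    have d5 : ¬ G.Adj (σ u) (σ v) := hSS u v hu hv
    have d6 : G.Adj (σ u) v ↔ u = v :=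
      ⟨fun h => hσinj u v hu hv (hσ' v hv _ h.symm), fun h => h ▸ (hσ u).symm⟩
    have d7 : G.Adj u (σ v) ↔ u = v :=
      ⟨fun h => (hσinj v u hv hu (hσ' u hu _ h)).symm, fun h => h ▸ hσ u⟩
    have d8 : ¬ G.Adj u v := fun h => not_leaf_of_adj_leaf htf hu h hv
    have d9 : G.Adj (τ u) (τ v) → u ≠ v := by rintro h rfl; exact h.ne rfl
    have d10 := G.adj_comm (τ u) (τ v)
    fin_cases i <;> fin_cases j <;>
      simp [φ, d1, d2, d3, d4, d5, d6, d7, d8, eq_comm] <;> grind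
end
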